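/- Let d ≥ 1, 1 ≤ p < 2, 0 < γ < d(1/p − 1/2) and a ≥ 0. There is a constant C depending only on d, γ and p (independent of a) such that for all Schwartz functions f₁, f₂, f₃ on ℝ^d, ‖H_{a,γ}(f₁, f₂, f₃)‖_{L̂^p} ≤ C ‖f₁‖_{L²} ‖f₂‖_{L²} · max(‖f₃‖_{L̂^p}, ‖f₃‖_{L²}). -/

import Mathlib

open MeasureTheory Real FourierTransform
open scoped ENNReal

/-- The Hartree trilinear operator
`H_{a,γ}(f,g,h)(x) = ((e^{-a|·|} |·|^{-γ}) ∗ (f ḡ))(x) · h(x)` on `ℝ^d`. -/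
noncomputable def hartreeOp (d : ℕ) (a γ : ℝ)
    (f g h : EuclideanSpace ℝ (Fin d) → ℂ) : EuclideanSpace ℝ (Fin d) → ℂ :=
  fun x =>
    (∫ y : EuclideanSpace ℝ (Fin d),
      ((Real.exp (-(a * ‖y‖)) * ‖y‖ ^ (-γ) : ℝ) : ℂ) *
        (f (x - y) * (starRingEnd ℂ) (g (x - y)))) * h x

/-!
The potential `e ^ (-a r) r ^ (-γ)` is a superposition of Gaussians `e ^ (-r² s)`: the Gamma
integral produces the power, the one-sided Lévy law (through the Cauchy–Schlömilch substitution)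
produces the exponential, and the convolution of the two measures produces their product. The
Lévy variable only increases `s`, so the Fourier transforms of these Gaussians add up to at most
`C |ξ| ^ (γ - d)`, with `C` independent of `a`.

Convolving the potential with `g = f₁ f̄₂` superposes its translates, and a translation does not
change the modulus of a Fourier transform. Hence `|𝓕 H(ξ)| ≤ C ‖g‖₁ (|𝓕 f₃| ∗ |·| ^ (γ - d))(ξ)`.
Cutting the Riesz kernel into an integrable part near `0` and an `L ^ s` part far from it, Young's
inequality bounds the two pieces by the norms of `𝓕 f₃` in `L ^ p'` and `L ^ 2`.
-/

section CauchySchlomilch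

variable {β : ℝ}

lemma injOn_sub_div_Ioi (hβ : 0 ≤ β) : Set.InjOn (fun v : ℝ => v - β / v) (Set.Ioi 0) := by
  refine StrictMonoOn.injOn fun x hx y _ hxy => ?_
  linarith [div_le_div_of_nonneg_left hβ hx hxy.le]

lemma image_sub_div_Ioi (hβ : 0 < β) : (fun v : ℝ => v - β / v) '' Set.Ioi 0 = Set.univ := by
  refine Set.eq_univ_of_forall fun u => ?_
  have hroot : |u| < √(u ^ 2 + 4 * β) := by
    rw [← sqrt_sq_eq_abs]
    exact sqrt_lt_sqrt (sq_nonneg u) (by linarith)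
  have hpos : 0 < u + √(u ^ 2 + 4 * β) := by linarith [neg_abs_le u]
  refine ⟨(u + √(u ^ 2 + 4 * β)) / 2, half_pos hpos, ?_⟩
  have hsq := sq_sqrt (show 0 ≤ u ^ 2 + 4 * β by positivity)
  field_simp
  linear_combination hsq

lemma lintegral_Ioi_comp_div (hβ : 0 < β) (f : ℝ → ℝ≥0∞) :
    ∫⁻ v in Set.Ioi 0, ENNReal.ofReal (β / v ^ 2) * f (β / v) = ∫⁻ v in Set.Ioi 0, f v := by
  have himage : (fun v => β / v) '' Set.Ioi 0 = Set.Ioi 0 := by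
    ext u
    refine ⟨?_, fun hu => ⟨β / u, div_pos hβ hu, div_div_cancel₀ hβ.ne'⟩⟩
    rintro ⟨v, hv, rfl⟩
    exact div_pos hβ hv
  have hderiv : ∀ v ∈ Set.Ioi (0 : ℝ),
      HasDerivWithinAt (fun v => β / v) (-(β / v ^ 2)) (Set.Ioi 0) v := fun v hv => by
    simpa [div_eq_mul_inv] using
      ((hasDerivAt_inv (ne_of_gt hv)).const_mul β).hasDerivWithinAt
  have hinj : Set.InjOn (fun v => β / v) (Set.Ioi 0) := fun x _ y _ hxy => by
    simpa [div_div_cancel₀ hβ.ne'] using congrArg (β / ·) hxy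
  conv_rhs =>
    rw [← himage, lintegral_image_eq_lintegral_abs_deriv_mul measurableSet_Ioi hderiv hinj]
  refine setLIntegral_congr_fun measurableSet_Ioi fun v _ => ?_
  simp only [abs_neg, abs_of_nonneg (div_nonneg hβ.le (sq_nonneg v))]

lemma lintegral_eq_two_mul_lintegral_Ioi_of_even {f : ℝ → ℝ≥0∞} (hf : ∀ u, f (-u) = f u) :
    ∫⁻ u, f u = 2 * ∫⁻ u in Set.Ioi 0, f u := by
  have hreflect : ∫⁻ u in Set.Iic 0, f u = ∫⁻ u in Set.Ioi 0, f u := by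
    rw [setLIntegral_congr Iio_ae_eq_Iic.symm, ← lintegral_indicator measurableSet_Iio,
      ← lintegral_indicator measurableSet_Ioi, ← lintegral_neg_eq_self]
    simp [Set.indicator, hf]
  rw [← setLIntegral_univ, ← Set.Iic_union_Ioi (a := (0 : ℝ)),
    lintegral_union measurableSet_Ioi (Set.Iic_disjoint_Ioi le_rfl), hreflect, two_mul]

lemma lintegral_Ioi_comp_sub_div (hβ : 0 ≤ β) {f : ℝ → ℝ≥0∞} (hf : Measurable f)
    (hf_even : ∀ u, f (-u) = f u) :
    ∫⁻ v in Set.Ioi 0, f (v - β / v) = ∫⁻ v in Set.Ioi 0, f v := by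
  obtain rfl | hβ := hβ.eq_or_lt
  · simp
  have hderiv : ∀ v ∈ Set.Ioi (0 : ℝ),
      HasDerivWithinAt (fun v => v - β / v) (1 + β / v ^ 2) (Set.Ioi 0) v := fun v hv => by
    simpa [div_eq_mul_inv, Pi.sub_def] using
      ((hasDerivAt_id v).sub ((hasDerivAt_inv (ne_of_gt hv)).const_mul β)).hasDerivWithinAt
  have hswap : ∫⁻ v in Set.Ioi 0, ENNReal.ofReal (β / v ^ 2) * f (v - β / v) =
      ∫⁻ v in Set.Ioi 0, f (v - β / v) := by
    rw [← lintegral_Ioi_comp_div hβ fun v => f (v - β / v)]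
    refine setLIntegral_congr_fun measurableSet_Ioi fun v _ => ?_
    simp only [div_div_cancel₀ hβ.ne', ← hf_even (v - β / v), neg_sub]
  have hsubst := calc
    ∫⁻ u, f u = ∫⁻ v in Set.Ioi 0, ENNReal.ofReal |1 + β / v ^ 2| * f (v - β / v) := by
      rw [← lintegral_image_eq_lintegral_abs_deriv_mul measurableSet_Ioi hderiv
        (injOn_sub_div_Ioi hβ.le), image_sub_div_Ioi hβ, setLIntegral_univ]
    _ = ∫⁻ v in Set.Ioi 0, (f (v - β / v) + ENNReal.ofReal (β / v ^ 2) * f (v - β / v)) := by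
      refine setLIntegral_congr_fun measurableSet_Ioi fun v _ => ?_
      have : 0 ≤ β / v ^ 2 := by positivity
      simp only [abs_of_nonneg (add_nonneg zero_le_one this), ENNReal.ofReal_add zero_le_one this,
        ENNReal.ofReal_one, add_mul, one_mul]
    _ = 2 * ∫⁻ v in Set.Ioi 0, f (v - β / v) := by
      rw [lintegral_add_left (by fun_prop), hswap, two_mul]
  rw [lintegral_eq_two_mul_lintegral_Ioi_of_even hf_even] at hsubst
  exact ((ENNReal.mul_right_inj two_ne_zero ENNReal.ofNat_ne_top).1 hsubst).symm

end CauchySchlomilch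

section MixingMeasure

variable {a γ c r : ℝ}

/-- The measure `Γ(c)⁻¹ t ^ (c - 1) dt` on `(0, ∞)`, which represents the power `x ^ (-c)` as a
superposition of the exponentials `e ^ (-x t)`. -/
noncomputable def rpowMixingMeasure (c : ℝ) : Measure ℝ :=
  (volume.restrict (Set.Ioi 0)).withDensity fun t => ENNReal.ofReal (t ^ (c - 1) / Gamma c)

/-- The one-sided Lévy distribution, i.e. the hitting time law with Laplace transform
`x ↦ e ^ (-a √x)`, encoded as the law of `a² / (4 v²)` for `v` with the half-normal density
`(2 / √π) e ^ (-v²)` on `(0, ∞)`. -/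
noncomputable def levyMeasure (a : ℝ) : Measure ℝ :=
  ((volume.restrict (Set.Ioi 0)).withDensity fun v =>
    ENNReal.ofReal (2 / √π * exp (-v ^ 2))).map fun v => a ^ 2 / (4 * v ^ 2)

/-- The measure on `(0, ∞)` which represents the potential `e ^ (-a r) r ^ (-γ)` as a superposition
of the Gaussians `e ^ (-r² s)`. -/
noncomputable def yukawaMixingMeasure (γ a : ℝ) : Measure ℝ :=
  rpowMixingMeasure (γ / 2) ∗ levyMeasure a

instance : SFinite (rpowMixingMeasure c) := by
  unfold rpowMixingMeasure
  infer_instance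

instance : SFinite (levyMeasure a) := by
  unfold levyMeasure
  infer_instance

instance : SFinite (yukawaMixingMeasure γ a) := by
  unfold yukawaMixingMeasure
  infer_instance

lemma lintegral_rpowMixingMeasure {f : ℝ → ℝ≥0∞} (hf : Measurable f) :
    ∫⁻ t, f t ∂rpowMixingMeasure c =
      ∫⁻ t in Set.Ioi 0, ENNReal.ofReal (t ^ (c - 1) / Gamma c) * f t := by
  rw [rpowMixingMeasure, lintegral_withDensity_eq_lintegral_mul _ (by fun_prop) hf]
  rfl

lemma lintegral_levyMeasure {f : ℝ → ℝ≥0∞} (hf : Measurable f) :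
    ∫⁻ σ, f σ ∂levyMeasure a =
      ∫⁻ v in Set.Ioi 0, ENNReal.ofReal (2 / √π * exp (-v ^ 2)) * f (a ^ 2 / (4 * v ^ 2)) := by
  rw [levyMeasure, lintegral_map hf (by fun_prop),
    lintegral_withDensity_eq_lintegral_mul _ (by fun_prop) (by fun_prop)]
  rfl

lemma ae_pos_rpowMixingMeasure : ∀ᵐ t ∂rpowMixingMeasure c, 0 < t :=
  (withDensity_absolutelyContinuous _ _).ae_le (ae_restrict_mem measurableSet_Ioi)

lemma ae_nonneg_levyMeasure : ∀ᵐ σ ∂levyMeasure a, 0 ≤ σ := by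
  rw [levyMeasure, ae_map_iff (by fun_prop) measurableSet_Ici]
  exact Filter.Eventually.of_forall fun v => by positivity

lemma ae_pos_yukawaMixingMeasure : ∀ᵐ s ∂yukawaMixingMeasure γ a, 0 < s := by
  rw [yukawaMixingMeasure, Measure.conv, ae_map_iff (by fun_prop) measurableSet_Ioi]
  filter_upwards [Measure.quasiMeasurePreserving_fst.ae ae_pos_rpowMixingMeasure,
    Measure.quasiMeasurePreserving_snd.ae ae_nonneg_levyMeasure] with q ht hσ
  exact add_pos_of_pos_of_nonneg ht hσ

lemma lintegral_exp_neg_mul_rpowMixingMeasure (hc : 0 < c) {x : ℝ} (hx : 0 < x) :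
    ∫⁻ t, ENNReal.ofReal (exp (-(x * t))) ∂rpowMixingMeasure c = ENNReal.ofReal (x ^ (-c)) := by
  have hgamma : ∫⁻ t in Set.Ioi 0, ProbabilityTheory.gammaPDF c x t = 1 := by
    have hsplit := lintegral_add_compl (μ := volume) (ProbabilityTheory.gammaPDF c x)
      (measurableSet_Ioi (a := (0 : ℝ)))
    rwa [Set.compl_Ioi, setLIntegral_congr Iio_ae_eq_Iic.symm,
      ProbabilityTheory.lintegral_gammaPDF_of_nonpos le_rfl, add_zero,
      ProbabilityTheory.lintegral_gammaPDF_eq_one hc hx] at hsplit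
  rw [lintegral_rpowMixingMeasure (by fun_prop), ← mul_one (ENNReal.ofReal (x ^ (-c))), ← hgamma,
    ← lintegral_const_mul' _ _ ENNReal.ofReal_ne_top]
  refine setLIntegral_congr_fun measurableSet_Ioi fun t ht => ?_
  have ht : 0 < t := ht
  have : 0 < Gamma c := Gamma_pos_of_pos hc
  simp only [ProbabilityTheory.gammaPDF_of_nonneg ht.le]
  rw [← ENNReal.ofReal_mul (by positivity), ← ENNReal.ofReal_mul (by positivity), rpow_neg hx.le]
  congr 1
  field_simp

lemma lintegral_Ioi_exp_neg_sq :
    ∫⁻ v in Set.Ioi (0 : ℝ), ENNReal.ofReal (exp (-v ^ 2)) = ENNReal.ofReal (√π / 2) := by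
  have hint : IntegrableOn (fun v : ℝ => exp (-v ^ 2)) (Set.Ioi 0) := by
    simpa using (integrable_exp_neg_mul_sq one_pos).integrableOn
  rw [← ofReal_integral_eq_lintegral_ofReal hint (ae_of_all _ fun v => (exp_pos _).le)]
  simpa using congrArg ENNReal.ofReal (integral_gaussian_Ioi 1)

-- Completing the square, `v² + (a r)² / (4 v²) = (v - β / v)² + a r` with `β = a r / 2`.
lemma lintegral_exp_neg_mul_levyMeasure (har : 0 ≤ a * r) :
    ∫⁻ σ, ENNReal.ofReal (exp (-(r ^ 2 * σ))) ∂levyMeasure a =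
      ENNReal.ofReal (exp (-(a * r))) := by
  have : 0 < √π := sqrt_pos.2 pi_pos
  calc
    ∫⁻ σ, ENNReal.ofReal (exp (-(r ^ 2 * σ))) ∂levyMeasure a
    _ = ∫⁻ v in Set.Ioi 0, ENNReal.ofReal (2 / √π * exp (-(a * r))) *
          ENNReal.ofReal (exp (-(v - a * r / 2 / v) ^ 2)) := by
      rw [lintegral_levyMeasure (by fun_prop)]
      refine setLIntegral_congr_fun measurableSet_Ioi fun v hv => ?_
      have hv : v ≠ 0 := ne_of_gt hv
      rw [← ENNReal.ofReal_mul (by positivity), ← ENNReal.ofReal_mul (by positivity), mul_assoc,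
        mul_assoc, ← exp_add, ← exp_add]
      congr 3
      field_simp
      ring
    _ = ENNReal.ofReal (2 / √π * exp (-(a * r))) * ENNReal.ofReal (√π / 2) := by
      rw [lintegral_const_mul _ (by fun_prop),
        lintegral_Ioi_comp_sub_div (f := fun v => ENNReal.ofReal (exp (-v ^ 2))) (by positivity)
          (by fun_prop) (by simp), lintegral_Ioi_exp_neg_sq]
    _ = ENNReal.ofReal (exp (-(a * r))) := by
      rw [← ENNReal.ofReal_mul (by positivity)]
      congr 1
      field_simp

instance : IsProbabilityMeasure (levyMeasure a) where
  measure_univ := by simpa using lintegral_exp_neg_mul_levyMeasure (a := a) (r := 0) (by simp)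

lemma lintegral_exp_neg_mul_yukawaMixingMeasure (hγ : 0 < γ) (ha : 0 ≤ a) (hr : 0 < r) :
    ∫⁻ s, ENNReal.ofReal (exp (-(r ^ 2 * s))) ∂yukawaMixingMeasure γ a =
      ENNReal.ofReal (exp (-(a * r)) * r ^ (-γ)) := by
  have hsplit (t σ : ℝ) : ENNReal.ofReal (exp (-(r ^ 2 * (t + σ)))) =
      ENNReal.ofReal (exp (-(r ^ 2 * t))) * ENNReal.ofReal (exp (-(r ^ 2 * σ))) := by
    rw [← ENNReal.ofReal_mul (exp_pos _).le, ← exp_add]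
    ring_nf
  have hpow : (r ^ 2) ^ (-(γ / 2)) = r ^ (-γ) := by
    rw [← rpow_natCast_mul hr.le]
    congr 1
    push_cast
    ring
  rw [yukawaMixingMeasure, Measure.lintegral_conv (by fun_prop)]
  simp_rw [hsplit, lintegral_const_mul' _ _ ENNReal.ofReal_ne_top,
    lintegral_exp_neg_mul_levyMeasure (mul_nonneg ha hr.le)]
  rw [lintegral_mul_const _ (by fun_prop),
    lintegral_exp_neg_mul_rpowMixingMeasure (half_pos hγ) (pow_pos hr 2), hpow,
    ← ENNReal.ofReal_mul (by positivity), mul_comm]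

end MixingMeasure

section MixedGaussianTail

variable {c k x R s : ℝ}

lemma rpow_mul_exp_neg_le (hk : 0 < k) (hx : 0 ≤ x) : x ^ k * exp (-x) ≤ k ^ k := by
  have hexp : x / k ≤ exp (x / k) := by linarith [add_one_le_exp (x / k)]
  have hpow : x ^ k / k ^ k ≤ exp x := calc
    x ^ k / k ^ k = (x / k) ^ k := (div_rpow hx hk.le k).symm
    _ ≤ exp (x / k) ^ k := rpow_le_rpow (by positivity) hexp hk.le
    _ = exp x := by rw [← exp_mul, div_mul_cancel₀ x hk.ne']
  rw [exp_neg, ← div_eq_mul_inv]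
  exact div_le_of_le_mul₀ (exp_pos x).le (by positivity)
    (by simpa [mul_comm] using (div_le_iff₀ (by positivity)).1 hpow)

lemma rpow_neg_mul_exp_neg_div_le (hk : 0 < k) (hR : 0 < R) (hs : 0 < s) :
    s ^ (-k) * exp (-(R / s)) ≤ max 1 (k ^ k) * max R s ^ (-k) := by
  rcases le_total R s with h | h
  · rw [max_eq_right h, mul_comm]
    gcongr
    exact (exp_le_one_iff.2 (neg_nonpos.2 (by positivity))).trans (le_max_left _ _)
  · have hscale : s ^ (-k) = (R / s) ^ k * R ^ (-k) := by
      rw [div_rpow hR.le hs.le, rpow_neg hR.le, rpow_neg hs.le]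
      field_simp
    rw [max_eq_left h, hscale, mul_right_comm]
    gcongr
    exact (rpow_mul_exp_neg_le hk (by positivity)).trans (le_max_right _ _)

lemma lintegral_Ioc_rpow_sub_one (hc : 0 < c) (hR : 0 ≤ R) :
    ∫⁻ t in Set.Ioc 0 R, ENNReal.ofReal (t ^ (c - 1)) = ENNReal.ofReal (R ^ c / c) := by
  have hint : IntegrableOn (fun t : ℝ => t ^ (c - 1)) (Set.Ioc 0 R) :=
    (intervalIntegrable_iff_integrableOn_Ioc_of_le hR).1
      (intervalIntegral.intervalIntegrable_rpow' (by linarith))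
  have hnonneg : 0 ≤ᵐ[volume.restrict (Set.Ioc 0 R)] fun t => t ^ (c - 1) :=
    (ae_restrict_mem measurableSet_Ioc).mono fun t ht => rpow_nonneg ht.1.le _
  rw [← ofReal_integral_eq_lintegral_ofReal hint hnonneg, ← intervalIntegral.integral_of_le hR,
    integral_rpow (Or.inl (by linarith)), sub_add_cancel, zero_rpow hc.ne', sub_zero]

lemma lintegral_Ioi_rpow_neg_sub_one (hc : 0 < c) (hR : 0 < R) :
    ∫⁻ t in Set.Ioi R, ENNReal.ofReal (t ^ (-c - 1)) = ENNReal.ofReal (R ^ (-c) / c) := by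
  have hnonneg : 0 ≤ᵐ[volume.restrict (Set.Ioi R)] fun t => t ^ (-c - 1) :=
    (ae_restrict_mem measurableSet_Ioi).mono fun t ht => rpow_nonneg (hR.trans ht).le _
  rw [← ofReal_integral_eq_lintegral_ofReal (integrableOn_Ioi_rpow_of_lt (by linarith) hR) hnonneg,
    integral_Ioi_rpow_of_lt (by linarith) hR, sub_add_cancel, neg_div_neg_eq]

lemma lintegral_Ioi_rpow_sub_one_mul_max_rpow (hc : 0 < c) (hck : c < k) (hR : 0 < R) :
    ∫⁻ t in Set.Ioi 0, ENNReal.ofReal (t ^ (c - 1)) * ENNReal.ofReal (max R t ^ (-k)) =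
      ENNReal.ofReal (c⁻¹ + (k - c)⁻¹) * ENNReal.ofReal (R ^ (c - k)) := by
  have hkc : 0 < k - c := sub_pos.2 hck
  have hnear : ∫⁻ t in Set.Ioc 0 R, ENNReal.ofReal (t ^ (c - 1)) * ENNReal.ofReal (max R t ^ (-k)) =
      ENNReal.ofReal (R ^ c / c) * ENNReal.ofReal (R ^ (-k)) := by
    rw [← lintegral_Ioc_rpow_sub_one hc hR.le, ← lintegral_mul_const _ (by fun_prop)]
    exact setLIntegral_congr_fun measurableSet_Ioc fun t ht => by simp only [max_eq_left ht.2]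
  have hfar : ∫⁻ t in Set.Ioi R, ENNReal.ofReal (t ^ (c - 1)) * ENNReal.ofReal (max R t ^ (-k)) =
      ENNReal.ofReal (R ^ (-(k - c)) / (k - c)) := by
    rw [← lintegral_Ioi_rpow_neg_sub_one hkc hR]
    refine setLIntegral_congr_fun measurableSet_Ioi fun t ht => ?_
    have ht : R < t := ht
    have ht0 : 0 < t := hR.trans ht
    simp only [max_eq_right ht.le]
    rw [← ENNReal.ofReal_mul (by positivity), ← rpow_add ht0]
    ring_nf
  rw [← Set.Ioc_union_Ioi_eq_Ioi hR.le,
    lintegral_union measurableSet_Ioi (Set.Ioc_disjoint_Ioi le_rfl), hnear, hfar,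
    ← ENNReal.ofReal_mul (by positivity), ← ENNReal.ofReal_add (by positivity) (by positivity),
    ← ENNReal.ofReal_mul (by positivity), neg_sub, sub_eq_add_neg c k, rpow_add hR]
  congr 1
  ring

lemma lintegral_rpowMixingMeasure_max_rpow (hc : 0 < c) (hck : c < k) (hR : 0 < R) :
    ∫⁻ t, ENNReal.ofReal (max R t ^ (-k)) ∂rpowMixingMeasure c =
      ENNReal.ofReal ((c⁻¹ + (k - c)⁻¹) / Gamma c) * ENNReal.ofReal (R ^ (c - k)) := by
  have : 0 < Gamma c := Gamma_pos_of_pos hc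
  have hfactor (t : ℝ) : ENNReal.ofReal (t ^ (c - 1) / Gamma c) =
      ENNReal.ofReal (Gamma c)⁻¹ * ENNReal.ofReal (t ^ (c - 1)) := by
    rw [← ENNReal.ofReal_mul (by positivity), div_eq_inv_mul]
  rw [lintegral_rpowMixingMeasure (by fun_prop), setLIntegral_congr_fun measurableSet_Ioi
    fun t _ => by rw [hfactor t, mul_assoc], lintegral_const_mul' _ _ ENNReal.ofReal_ne_top,
    lintegral_Ioi_rpow_sub_one_mul_max_rpow hc hck hR, ← mul_assoc,
    ← ENNReal.ofReal_mul (by positivity), div_eq_inv_mul]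

-- Adding the Lévy variable only increases `s`, so the decreasing majorant of
-- `rpow_neg_mul_exp_neg_div_le` makes the bound uniform in `a`.
lemma exists_lintegral_yukawaMixingMeasure_le {γ : ℝ} (hγ : 0 < γ) (hk : γ / 2 < k) :
    ∃ C : ℝ, 0 < C ∧ ∀ a R : ℝ, 0 < R →
      ∫⁻ s, ENNReal.ofReal (s ^ (-k) * exp (-(R / s))) ∂yukawaMixingMeasure γ a ≤
        ENNReal.ofReal C * ENNReal.ofReal (R ^ (γ / 2 - k)) := by
  have hk0 : 0 < k := (half_pos hγ).trans hk
  have : 0 < k - γ / 2 := sub_pos.2 hk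
  have : 0 < Gamma (γ / 2) := Gamma_pos_of_pos (half_pos hγ)
  refine ⟨max 1 (k ^ k) * (((γ / 2)⁻¹ + (k - γ / 2)⁻¹) / Gamma (γ / 2)), by positivity,
    fun a R hR => ?_⟩
  have hmono (t σ : ℝ) (ht : 0 < t) (hσ : 0 ≤ σ) :
      ENNReal.ofReal ((t + σ) ^ (-k) * exp (-(R / (t + σ)))) ≤
        ENNReal.ofReal (max 1 (k ^ k)) * ENNReal.ofReal (max R t ^ (-k)) := by
    rw [← ENNReal.ofReal_mul (by positivity)]
    refine ENNReal.ofReal_le_ofReal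
      ((rpow_neg_mul_exp_neg_div_le hk0 hR (add_pos_of_pos_of_nonneg ht hσ)).trans ?_)
    gcongr ?_ * ?_
    exact rpow_le_rpow_of_nonpos (by positivity) (max_le_max_left R (by linarith)) (by linarith)
  calc
    ∫⁻ s, ENNReal.ofReal (s ^ (-k) * exp (-(R / s))) ∂yukawaMixingMeasure γ a
    _ = ∫⁻ t, ∫⁻ σ, ENNReal.ofReal ((t + σ) ^ (-k) * exp (-(R / (t + σ)))) ∂levyMeasure a
          ∂rpowMixingMeasure (γ / 2) := by
      rw [yukawaMixingMeasure, Measure.lintegral_conv (by fun_prop)]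
    _ ≤ ∫⁻ t, ∫⁻ _, ENNReal.ofReal (max 1 (k ^ k)) * ENNReal.ofReal (max R t ^ (-k)) ∂levyMeasure a
          ∂rpowMixingMeasure (γ / 2) :=
      lintegral_mono_ae <| ae_pos_rpowMixingMeasure.mono fun t ht =>
        lintegral_mono_ae <| ae_nonneg_levyMeasure.mono fun σ hσ => hmono t σ ht hσ
    _ = _ := by
      simp only [lintegral_const, measure_univ, mul_one]
      rw [lintegral_const_mul' _ _ ENNReal.ofReal_ne_top,
        lintegral_rpowMixingMeasure_max_rpow (half_pos hγ) hk hR, ← mul_assoc,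
        ← ENNReal.ofReal_mul (by positivity)]

end MixedGaussianTail

section FourierMinkowski

variable {V E S : Type*} [NormedAddCommGroup V] [InnerProductSpace ℝ V] [FiniteDimensional ℝ V]
  [MeasurableSpace V] [BorelSpace V] [NormedAddCommGroup E] [NormedSpace ℂ E]
  [MeasurableSpace S] {μ : Measure S}

lemma enorm_circle_smul (c : Circle) (w : E) : ‖c • w‖ₑ = ‖w‖ₑ := by
  rw [← ofReal_norm, Circle.norm_smul, ofReal_norm]

lemma continuous_fourier_of_integrable {f : V → E} (hf : Integrable f) : Continuous (𝓕 f) :=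
  VectorFourier.fourierIntegral_continuous continuous_fourierChar continuous_inner hf

lemma enorm_fourier_integral_le [SFinite μ] {Ψ : V → S → E}
    (hΨ : Integrable (Function.uncurry Ψ) (volume.prod μ)) (ξ : V) :
    ‖𝓕 (fun x => ∫ s, Ψ x s ∂μ) ξ‖ₑ ≤ ∫⁻ s, ‖𝓕 (fun x => Ψ x s) ξ‖ₑ ∂μ := by
  have hphase : Continuous fun x : V => 𝐞 (-inner ℝ x ξ) :=
    continuous_fourierChar.comp (by fun_prop)
  have hint : Integrable (Function.uncurry fun x s => 𝐞 (-inner ℝ x ξ) • Ψ x s)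
      (volume.prod μ) :=
    hΨ.congr' (hphase.aestronglyMeasurable.comp_fst.smul hΨ.1)
      (.of_forall fun _ => (Circle.norm_smul _ _).symm)
  calc
    ‖𝓕 (fun x => ∫ s, Ψ x s ∂μ) ξ‖ₑ
    _ = ‖∫ x, ∫ s, 𝐞 (-inner ℝ x ξ) • Ψ x s ∂μ‖ₑ := by
      simp only [Real.fourier_eq, Circle.smul_def, integral_smul]
    _ = ‖∫ s, 𝓕 (fun x => Ψ x s) ξ ∂μ‖ₑ := by
      rw [integral_integral_swap hint]
      rfl
    _ ≤ ∫⁻ s, ‖𝓕 (fun x => Ψ x s) ξ‖ₑ ∂μ := enorm_integral_le_lintegral_enorm _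

lemma enorm_fourier_const_smul (c : ℂ) (f : V → E) (ξ : V) :
    ‖𝓕 (fun x => c • f x) ξ‖ₑ = ‖c‖ₑ * ‖𝓕 f ξ‖ₑ := by
  rw [← enorm_smul]
  exact congrArg _ (congrFun (VectorFourier.fourierIntegral_const_smul 𝐞 volume (innerₗ V) f c) ξ)

lemma fourier_fourierChar_smul (f : V → E) (η ξ : V) :
    𝓕 (fun x => 𝐞 (inner ℝ η x) • f x) ξ = 𝓕 f (ξ - η) := by
  simp only [Real.fourier_eq, smul_smul, ← AddChar.map_add_eq_mul]
  congr! 4 with x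
  rw [inner_sub_right, real_inner_comm x η]
  ring

lemma enorm_fourier_comp_sub_right (f : V → E) (z ξ : V) :
    ‖𝓕 (fun x => f (x - z)) ξ‖ₑ = ‖𝓕 f ξ‖ₑ := by
  have h : 𝓕 (f ∘ fun x => x + -z) ξ = 𝐞 (inner ℝ (-z) ξ) • 𝓕 f ξ :=
    congrFun (VectorFourier.fourierIntegral_comp_add_right 𝐞 volume (innerₗ V) f (-z)) ξ
  simpa [Function.comp_def, ← sub_eq_add_neg, enorm_circle_smul] using congrArg enorm h

lemma enorm_le_lintegral_enorm_fourier [CompleteSpace E] {h : V → E} (hc : Continuous h)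
    (hi : Integrable h) (hF : Integrable (𝓕 h)) (x : V) : ‖h x‖ₑ ≤ ∫⁻ η, ‖𝓕 h η‖ₑ := by
  conv_lhs => rw [← hc.fourierInv_fourier_eq hi hF, Real.fourierInv_eq]
  exact (enorm_integral_le_lintegral_enorm _).trans_eq (by simp only [enorm_circle_smul])

-- Inversion writes `h * k` as a superposition of modulations of `k`.
lemma enorm_fourier_mul_le_lconvolution {h k : V → ℂ} (hc : Continuous h) (hi : Integrable h)
    (hF : Integrable (𝓕 h)) (hk : Integrable k) (ξ : V) :
    ‖𝓕 (fun x => h x * k x) ξ‖ₑ ≤ ((‖𝓕 h ·‖ₑ) ⋆ₗ (‖𝓕 k ·‖ₑ)) ξ := by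
  have hinv (x : V) : h x * k x = ∫ η, 𝓕 h η • 𝐞 (inner ℝ η x) • k x := by
    conv_lhs => rw [← hc.fourierInv_fourier_eq hi hF, Real.fourierInv_eq, ← integral_mul_const]
    simp only [Circle.smul_def, smul_eq_mul, mul_assoc, mul_left_comm]
  have hphase : Continuous fun v : V × V => 𝐞 (inner ℝ v.2 v.1) :=
    continuous_fourierChar.comp (by fun_prop)
  have hint : Integrable (Function.uncurry fun x η => 𝓕 h η • 𝐞 (inner ℝ η x) • k x)
      (volume.prod volume) :=
    (hF.mul_prod hk).swap.congr'
      (hF.1.comp_snd.smul (hphase.aestronglyMeasurable.smul hk.1.comp_fst))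
      (.of_forall fun v => by simp [Function.uncurry, Circle.norm_smul])
  calc
    ‖𝓕 (fun x => h x * k x) ξ‖ₑ
    _ ≤ ∫⁻ η, ‖𝓕 (fun x => 𝓕 h η • 𝐞 (inner ℝ η x) • k x) ξ‖ₑ := by
      simp only [hinv]
      exact enorm_fourier_integral_le hint ξ
    _ = ((‖𝓕 h ·‖ₑ) ⋆ₗ (‖𝓕 k ·‖ₑ)) ξ := by
      refine lintegral_congr fun η => ?_
      rw [enorm_fourier_const_smul, fourier_fourierChar_smul, sub_eq_neg_add]

end FourierMinkowski

section Young

variable {G : Type*} [AddCommGroup G] [MeasurableSpace G] [MeasurableAdd₂ G] [MeasurableNeg G]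
  {μ : Measure G} {f g : G → ℝ≥0∞}

lemma lconvolution_add_right {h : G → ℝ≥0∞} (hf : Measurable f) (hg : Measurable g) :
    f ⋆ₗ[μ] (g + h) = f ⋆ₗ[μ] g + f ⋆ₗ[μ] h := by
  ext x
  simp only [lconvolution_def, Pi.add_apply, mul_add]
  exact lintegral_add_left (by fun_prop) _

variable [μ.IsAddLeftInvariant]

lemma lintegral_lconvolution [SFinite μ] (hf : Measurable f) (hg : Measurable g) :
    ∫⁻ x, (f ⋆ₗ[μ] g) x ∂μ = (∫⁻ x, f x ∂μ) * ∫⁻ x, g x ∂μ := by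
  simp only [lconvolution_def]
  rw [lintegral_lintegral_swap (by fun_prop), ← lintegral_mul_const _ hf]
  refine lintegral_congr fun y => ?_
  rw [lintegral_const_mul _ (by fun_prop), lintegral_add_left_eq_self g (-y)]

variable [μ.IsNegInvariant]

lemma lintegral_comp_neg_add (x : G) : ∫⁻ y, g (-y + x) ∂μ = ∫⁻ y, g y ∂μ := by
  simpa only [neg_add_eq_sub] using lintegral_sub_left_eq_self g x

lemma lconvolution_rpow_le (hf : Measurable f) (hg : Measurable g) {u v w : ℝ} (hu : 0 ≤ u)
    (hv : 0 ≤ v) (hw : 0 ≤ w) (huvw : u + v + w = 1) (x : G) :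
    ((fun y => f y ^ (u + v)) ⋆ₗ[μ] fun y => g y ^ (u + w)) x ≤
      (f ⋆ₗ[μ] g) x ^ u * ((∫⁻ y, f y ∂μ) ^ v * (∫⁻ y, g y ∂μ) ^ w) := by
  have hgx : Measurable fun y => g (-y + x) := by fun_prop
  have holder := ENNReal.lintegral_prod_norm_pow_le (μ := μ) (Finset.univ : Finset (Fin 3))
    (f := ![fun y => f y * g (-y + x), f, fun y => g (-y + x)]) (p := ![u, v, w])
    (by
      intro i _
      fin_cases i
      exacts [(hf.mul hgx).aemeasurable, hf.aemeasurable, hgx.aemeasurable])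
    (by simp [Fin.sum_univ_three, huvw])
    (by intro i _; fin_cases i <;> simpa)
  simp only [Fin.prod_univ_three, Matrix.cons_val_zero, Matrix.cons_val_one, Matrix.cons_val,
    lintegral_comp_neg_add x] at holder
  calc
    ((fun y => f y ^ (u + v)) ⋆ₗ[μ] fun y => g y ^ (u + w)) x
    _ = ∫⁻ y, (f y * g (-y + x)) ^ u * f y ^ v * g (-y + x) ^ w ∂μ :=
      lintegral_congr fun y => by
        dsimp only
        rw [ENNReal.rpow_add_of_nonneg _ _ hu hv, ENNReal.rpow_add_of_nonneg _ _ hu hw,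
          ENNReal.mul_rpow_of_nonneg _ _ hu]
        ring
    _ ≤ _ := holder.trans_eq (mul_assoc _ _ _)

lemma eLpNorm_lconvolution_le_eLpNorm_top_mul (hg : Measurable g) :
    eLpNorm (f ⋆ₗ[μ] g) ∞ μ ≤ eLpNorm f ∞ μ * eLpNorm g 1 μ := by
  refine eLpNormEssSup_le_of_ae_enorm_bound (.of_forall fun x => ?_)
  calc
    ‖(f ⋆ₗ[μ] g) x‖ₑ
    _ ≤ ∫⁻ y, eLpNorm f ∞ μ * g (-y + x) ∂μ :=
      lintegral_mono_ae <| (enorm_ae_le_eLpNormEssSup f μ).mono fun y hy => by gcongr; exact hy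
    _ = eLpNorm f ∞ μ * eLpNorm g 1 μ := by
      rw [lintegral_const_mul _ (by fun_prop), lintegral_comp_neg_add,
        eLpNorm_one_eq_lintegral_enorm]
      simp only [enorm_eq_self]

variable [SFinite μ]

lemma eLpNorm_lconvolution_rpow_le (hf : Measurable f) (hg : Measurable g) {q : ℝ≥0∞} (hq : q ≠ 0)
    {v w : ℝ} (hv : 0 ≤ v) (hw : 0 ≤ w) (hqvw : q.toReal⁻¹ + v + w = 1) :
    eLpNorm ((fun y => f y ^ (q.toReal⁻¹ + v)) ⋆ₗ[μ] fun y => g y ^ (q.toReal⁻¹ + w)) q μ ≤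
      (∫⁻ y, f y ∂μ) ^ (q.toReal⁻¹ + v) * (∫⁻ y, g y ∂μ) ^ (q.toReal⁻¹ + w) := by
  have hbound := lconvolution_rpow_le (μ := μ) hf hg (by positivity) hv hw hqvw
  rcases eq_or_ne q ∞ with rfl | hqt
  · rw [eLpNorm_exponent_top]
    refine eLpNormEssSup_le_of_ae_enorm_bound (.of_forall fun x => ?_)
    simpa using hbound x
  have hq0 : 0 < q.toReal := ENNReal.toReal_pos hq hqt
  rw [eLpNorm_eq_lintegral_rpow_enorm_toReal hq hqt, one_div,
    ENNReal.rpow_inv_le_iff hq0]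
  set F := ∫⁻ y, f y ∂μ
  set H := ∫⁻ y, g y ∂μ
  calc
    ∫⁻ x, ‖((fun y => f y ^ (q.toReal⁻¹ + v)) ⋆ₗ[μ] fun y => g y ^ (q.toReal⁻¹ + w)) x‖ₑ ^ q.toReal
      ∂μ
    _ ≤ ∫⁻ x, ((f ⋆ₗ[μ] g) x ^ q.toReal⁻¹ * (F ^ v * H ^ w)) ^ q.toReal ∂μ :=
      lintegral_mono fun x => ENNReal.rpow_le_rpow (hbound x) hq0.le
    _ = F * H * (F ^ v * H ^ w) ^ q.toReal := by
      simp only [ENNReal.mul_rpow_of_nonneg _ _ hq0.le, ENNReal.rpow_inv_rpow hq0.ne']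
      rw [lintegral_mul_const _ (measurable_lconvolution μ hf hg), lintegral_lconvolution hf hg]
    _ = (F ^ (q.toReal⁻¹ + v) * H ^ (q.toReal⁻¹ + w)) ^ q.toReal := by
      rw [ENNReal.rpow_add_of_nonneg _ _ (by positivity) hv,
        ENNReal.rpow_add_of_nonneg _ _ (by positivity) hw]
      simp only [ENNReal.mul_rpow_of_nonneg _ _ hq0.le, ENNReal.rpow_inv_rpow hq0.ne']
      ring

lemma eLpNorm_lconvolution_le_of_ne_top (hf : Measurable f) (hg : Measurable g) {q r s : ℝ≥0∞}
    (hr : 1 ≤ r) (hs : 1 ≤ s) (hrt : r ≠ ∞) (hst : s ≠ ∞) (hrs : r⁻¹ + s⁻¹ = 1 + q⁻¹) :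
    eLpNorm (f ⋆ₗ[μ] g) q μ ≤ eLpNorm f r μ * eLpNorm g s μ := by
  have hr0 : r ≠ 0 := (zero_lt_one.trans_le hr).ne'
  have hs0 : s ≠ 0 := (zero_lt_one.trans_le hs).ne'
  have hq0 : q ≠ 0 := by
    rintro rfl
    simp [hr0, hs0] at hrs
  have hr1 : r.toReal⁻¹ ≤ 1 := by
    simpa using ENNReal.toReal_mono ENNReal.one_ne_top (ENNReal.inv_le_one.2 hr)
  have hs1 : s.toReal⁻¹ ≤ 1 := by
    simpa using ENNReal.toReal_mono ENNReal.one_ne_top (ENNReal.inv_le_one.2 hs)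
  have hrs' : r.toReal⁻¹ + s.toReal⁻¹ = 1 + q.toReal⁻¹ := by
    simpa [ENNReal.toReal_add, hr0, hs0, hq0] using congrArg ENNReal.toReal hrs
  have young := eLpNorm_lconvolution_rpow_le (μ := μ) (hf.pow_const r.toReal)
    (hg.pow_const s.toReal) hq0 (v := r.toReal⁻¹ - q.toReal⁻¹) (w := s.toReal⁻¹ - q.toReal⁻¹)
    (by linarith) (by linarith) (by linarith)
  simpa only [add_sub_cancel, ENNReal.rpow_rpow_inv (ENNReal.toReal_pos hr0 hrt).ne',
    ENNReal.rpow_rpow_inv (ENNReal.toReal_pos hs0 hst).ne',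
    eLpNorm_eq_lintegral_rpow_enorm_toReal hr0 hrt, eLpNorm_eq_lintegral_rpow_enorm_toReal hs0 hst,
    enorm_eq_self, one_div] using young

theorem eLpNorm_lconvolution_le (hf : Measurable f) (hg : Measurable g) {q r s : ℝ≥0∞}
    (hr : 1 ≤ r) (hs : 1 ≤ s) (hrs : r⁻¹ + s⁻¹ = 1 + q⁻¹) :
    eLpNorm (f ⋆ₗ[μ] g) q μ ≤ eLpNorm f r μ * eLpNorm g s μ := by
  have endpoint {t : ℝ≥0∞} (ht : 1 ≤ t) (h : t⁻¹ = 1 + q⁻¹) : t = 1 ∧ q = ∞ := by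
    have hq : q⁻¹ = 0 := by
      have : 1 + q⁻¹ ≤ 1 + 0 := by simpa [← h] using ht
      simpa using (ENNReal.add_le_add_iff_left ENNReal.one_ne_top).1 this
    exact ⟨by simpa [hq] using h, by simpa using hq⟩
  by_cases hrt : r = ∞
  · obtain ⟨rfl, rfl⟩ := endpoint hs (by simpa [hrt] using hrs)
    rw [hrt]
    exact eLpNorm_lconvolution_le_eLpNorm_top_mul hg
  by_cases hst : s = ∞
  · obtain ⟨rfl, rfl⟩ := endpoint hr (by simpa [hst] using hrs)
    rw [lconvolution_comm, mul_comm, hst]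
    exact eLpNorm_lconvolution_le_eLpNorm_top_mul hf
  exact eLpNorm_lconvolution_le_of_ne_top hf hg hr hs hrt hst hrs

end Young

section RieszPotential

variable {V : Type*} [NormedAddCommGroup V] [NormedSpace ℝ V]

/-- The Riesz kernel `|x| ^ (α - d)` of order `α` on a `d`-dimensional space, without the customary
normalising constant; the value at the origin is a junk value. -/
noncomputable def rieszKernel (α : ℝ) (x : V) : ℝ≥0∞ :=
  ENNReal.ofReal (‖x‖ ^ (α - Module.finrank ℝ V))

variable [MeasurableSpace V] [BorelSpace V] {μ : Measure V} {α : ℝ}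

@[fun_prop]
lemma measurable_rieszKernel : Measurable (rieszKernel α : V → ℝ≥0∞) := by
  unfold rieszKernel
  fun_prop

variable [FiniteDimensional ℝ V] [μ.IsAddHaarMeasure]

lemma eLpNorm_one_indicator_ball_rieszKernel_lt_top [Nontrivial V] (hα : 0 < α) :
    eLpNorm ((Metric.ball 0 1).indicator (rieszKernel α)) 1 μ < ∞ := by
  have hint : IntegrableOn (fun x : V => ‖x‖ ^ (α - Module.finrank ℝ V)) (Metric.ball 0 1) μ :=
    integrableOn_ball_of_norm_le_rpow (C := 1) (α := Module.finrank ℝ V - α)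
      Module.finrank_pos (by linarith)
      (.of_forall fun x => by rw [norm_of_nonneg (by positivity), neg_sub, one_mul])
      (by fun_prop : Measurable _).aestronglyMeasurable
  rw [eLpNorm_one_eq_lintegral_enorm]
  simp only [enorm_eq_self]
  rw [lintegral_indicator measurableSet_ball]
  exact hint.lintegral_lt_top

lemma rpow_neg_le_two_rpow_mul_one_add_rpow_neg {b t : ℝ} (hb : 0 ≤ b) (ht : 1 ≤ t) :
    t ^ (-b) ≤ 2 ^ b * (1 + t) ^ (-b) := by
  rw [rpow_neg (by linarith), rpow_neg (by linarith), ← div_eq_mul_inv, ← inv_div,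
    ← div_rpow (by linarith) two_pos.le]
  gcongr
  linarith

lemma eLpNorm_indicator_compl_ball_rieszKernel_lt_top {s : ℝ≥0∞}
    (hα : α < Module.finrank ℝ V * (1 - s.toReal⁻¹)) :
    eLpNorm ((Metric.ball 0 1)ᶜ.indicator (rieszKernel α)) s μ < ∞ := by
  set d : ℝ := (Module.finrank ℝ V : ℝ)
  have hd0 : 0 ≤ d := by positivity
  have hαd : α < d := hα.trans_le (mul_le_of_le_one_right hd0 (by simp))
  rcases eq_or_ne s 0 with rfl | hs
  · simp
  rcases eq_or_ne s ∞ with rfl | hst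
  · refine (eLpNormEssSup_le_of_ae_enorm_bound (C := 1) (.of_forall fun x => ?_)).trans_lt
      ENNReal.one_lt_top
    refine Set.indicator_apply_le' (fun hx => ENNReal.ofReal_le_one.2 ?_) fun _ => zero_le
    exact rpow_le_one_of_one_le_of_nonpos (by simpa using hx) (by linarith)
  have hs0 : 0 < s.toReal := ENNReal.toReal_pos hs hst
  have hdecay : d < (d - α) * s.toReal := by
    have := mul_lt_mul_of_pos_right hα hs0
    rw [mul_assoc, sub_mul, inv_mul_cancel₀ hs0.ne'] at this
    linarith
  rw [eLpNorm_lt_top_iff_lintegral_rpow_enorm_lt_top hs hst]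
  calc
    ∫⁻ x, ‖(Metric.ball 0 1)ᶜ.indicator (rieszKernel α) x‖ₑ ^ s.toReal ∂μ
    _ ≤ ∫⁻ x : V, ENNReal.ofReal (2 ^ ((d - α) * s.toReal)) *
          ENNReal.ofReal ((1 + ‖x‖) ^ (-((d - α) * s.toReal))) ∂μ := by
      refine lintegral_mono fun x => ?_
      by_cases hx : x ∈ (Metric.ball (0 : V) 1)ᶜ
      · rw [Set.indicator_of_mem hx, enorm_eq_self, rieszKernel,
          ENNReal.ofReal_rpow_of_nonneg (by positivity) hs0.le, ← rpow_mul (by positivity),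
          ← ENNReal.ofReal_mul (by positivity), ← neg_sub, neg_mul]
        exact ENNReal.ofReal_le_ofReal (rpow_neg_le_two_rpow_mul_one_add_rpow_neg
          (hd0.trans hdecay.le) (by simpa using hx))
      · simp [Set.indicator_of_notMem hx, hs0]
    _ = ENNReal.ofReal (2 ^ ((d - α) * s.toReal)) *
          ∫⁻ x : V, ENNReal.ofReal ((1 + ‖x‖) ^ (-((d - α) * s.toReal))) ∂μ :=
      lintegral_const_mul' _ _ ENNReal.ofReal_ne_top
    _ < ∞ := ENNReal.mul_lt_top ENNReal.ofReal_lt_top (finite_integral_one_add_norm hdecay)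

lemma exists_young_exponent {q r : ℝ≥0∞} (hq : 1 ≤ q) (hr : 1 ≤ r)
    (hqr : q.toReal⁻¹ ≤ r.toReal⁻¹) :
    ∃ s : ℝ≥0∞, 1 ≤ s ∧ r⁻¹ + s⁻¹ = 1 + q⁻¹ ∧ 1 - s.toReal⁻¹ = r.toReal⁻¹ - q.toReal⁻¹ := by
  have hr' : r⁻¹ ≤ 1 := ENNReal.inv_le_one.2 hr
  have hqt : q⁻¹ ≠ ∞ := ne_top_of_le_ne_top ENNReal.one_ne_top (ENNReal.inv_le_one.2 hq)
  have hrt : r⁻¹ ≠ ∞ := ne_top_of_le_ne_top ENNReal.one_ne_top hr'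
  refine ⟨(1 + q⁻¹ - r⁻¹)⁻¹, ?_, ?_, ?_⟩
  · rw [ENNReal.one_le_inv, tsub_le_iff_right]
    refine add_le_add_right ?_ 1
    exact (ENNReal.toReal_le_toReal hqt hrt).1 (by simpa using hqr)
  · rw [inv_inv, add_tsub_cancel_of_le (hr'.trans le_self_add)]
  · rw [← ENNReal.toReal_inv, inv_inv, ENNReal.toReal_sub_of_le (hr'.trans le_self_add)
      (by simp [hqt]), ENNReal.toReal_add ENNReal.one_ne_top hqt]
    simp only [ENNReal.toReal_one, ENNReal.toReal_inv]
    ring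

-- Young's inequality with an integrable kernel near the origin and an `L ^ s` kernel far from it,
-- where `1 / r + 1 / s = 1 + 1 / q`.
theorem exists_eLpNorm_lconvolution_rieszKernel_le {q r : ℝ≥0∞} (hq : 1 ≤ q) (hr : 1 ≤ r)
    (hα : 0 < α) (hα' : α < Module.finrank ℝ V * (r.toReal⁻¹ - q.toReal⁻¹)) :
    ∃ C : ℝ≥0∞, C ≠ ∞ ∧ ∀ u : V → ℝ≥0∞, Measurable u →
      eLpNorm (u ⋆ₗ[μ] rieszKernel α) q μ ≤ C * max (eLpNorm u q μ) (eLpNorm u r μ) := by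
  have hpos : 0 < (Module.finrank ℝ V : ℝ) * (r.toReal⁻¹ - q.toReal⁻¹) := hα.trans hα'
  have hqr : q.toReal⁻¹ < r.toReal⁻¹ := sub_pos.1 (pos_of_mul_pos_right hpos (by positivity))
  have : Nontrivial V := Module.nontrivial_of_finrank_pos (R := ℝ)
    (Nat.pos_of_ne_zero fun h => by simp [h] at hpos)
  obtain ⟨s, hs, hrs, hsqr⟩ := exists_young_exponent hq hr hqr.le
  set near : V → ℝ≥0∞ := (Metric.ball 0 1).indicator (rieszKernel α)
  set far : V → ℝ≥0∞ := (Metric.ball 0 1)ᶜ.indicator (rieszKernel α)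
  have hnear_meas : Measurable near := measurable_rieszKernel.indicator measurableSet_ball
  have hfar_meas : Measurable far := measurable_rieszKernel.indicator measurableSet_ball.compl
  refine ⟨eLpNorm near 1 μ + eLpNorm far s μ, (ENNReal.add_lt_top.2
    ⟨eLpNorm_one_indicator_ball_rieszKernel_lt_top hα,
      eLpNorm_indicator_compl_ball_rieszKernel_lt_top (hsqr ▸ hα')⟩).ne, fun u hu => ?_⟩
  calc
    eLpNorm (u ⋆ₗ[μ] rieszKernel α) q μ
    _ = eLpNorm (u ⋆ₗ[μ] near + u ⋆ₗ[μ] far) q μ := by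
      rw [← lconvolution_add_right hu hnear_meas, Set.indicator_self_add_compl]
    _ ≤ eLpNorm (u ⋆ₗ[μ] near) q μ + eLpNorm (u ⋆ₗ[μ] far) q μ :=
      eLpNorm_add_le (measurable_lconvolution μ hu hnear_meas).aestronglyMeasurable
        (measurable_lconvolution μ hu hfar_meas).aestronglyMeasurable hq
    _ ≤ eLpNorm u q μ * eLpNorm near 1 μ + eLpNorm u r μ * eLpNorm far s μ := by
      gcongr
      · exact eLpNorm_lconvolution_le hu hnear_meas hq le_rfl (by simp [add_comm])
      · exact eLpNorm_lconvolution_le hu hfar_meas hr hs hrs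
    _ ≤ (eLpNorm near 1 μ + eLpNorm far s μ) * max (eLpNorm u q μ) (eLpNorm u r μ) := by
      rw [add_mul, mul_comm (eLpNorm u q μ), mul_comm (eLpNorm u r μ)]
      gcongr
      exacts [le_max_left _ _, le_max_right _ _]

end RieszPotential

section Superposition

variable {V : Type*} [NormedAddCommGroup V] [InnerProductSpace ℝ V] [FiniteDimensional ℝ V]
  [MeasurableSpace V] [BorelSpace V]

lemma integrable_translates_mul {g h K : V → ℂ} {M : ℝ≥0∞} (hg : Integrable g)
    (hh : AEStronglyMeasurable h) (hK : Measurable K) (hM : M ≠ ∞)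
    (hbound : ∀ᵐ z, ∫⁻ x, ‖h x‖ₑ * ‖K (x - z)‖ₑ ≤ M) :
    Integrable (Function.uncurry fun x z => g z • (h x * K (x - z))) (volume.prod volume) := by
  have hmeas : AEStronglyMeasurable (Function.uncurry fun x z => g z • (h x * K (x - z)))
      (volume.prod volume) :=
    hg.1.comp_snd.smul (hh.comp_fst.mul
      (hK.comp (measurable_fst.sub measurable_snd)).aestronglyMeasurable)
  refine ⟨hmeas, ?_⟩
  calc
    ∫⁻ v, ‖Function.uncurry (fun x z => g z • (h x * K (x - z))) v‖ₑ ∂(volume.prod volume)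
    _ = ∫⁻ z, ‖g z‖ₑ * ∫⁻ x, ‖h x‖ₑ * ‖K (x - z)‖ₑ := by
      rw [lintegral_prod_symm _ hmeas.enorm]
      refine lintegral_congr fun z => ?_
      simp only [Function.uncurry, enorm_smul, enorm_mul]
      exact lintegral_const_mul' _ _ enorm_ne_top
    _ ≤ ∫⁻ z, ‖g z‖ₑ * M :=
      lintegral_mono_ae <| hbound.mono fun z hz => by gcongr
    _ = (∫⁻ z, ‖g z‖ₑ) * M := lintegral_mul_const' _ _ hM
    _ < ∞ := ENNReal.mul_lt_top hg.2 hM.lt_top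

lemma enorm_fourier_convolution_mul_le {g h K : V → ℂ} {M B : ℝ≥0∞} (hg : Integrable g)
    (hh : AEStronglyMeasurable h) (hK : Measurable K) (hM : M ≠ ∞)
    (hbound : ∀ᵐ z, ∫⁻ x, ‖h x‖ₑ * ‖K (x - z)‖ₑ ≤ M) {ξ : V}
    (hB : ∀ᵐ z, ‖𝓕 (fun x => h x * K (x - z)) ξ‖ₑ ≤ B) :
    ‖𝓕 (fun x => (∫ y, K y * g (x - y)) * h x) ξ‖ₑ ≤ (∫⁻ z, ‖g z‖ₑ) * B := by
  have htranslate (x : V) : (∫ y, K y * g (x - y)) * h x = ∫ z, g z • (h x * K (x - z)) := by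
    rw [← integral_sub_left_eq_self _ volume x, ← integral_mul_const]
    simp only [sub_sub_cancel, smul_eq_mul, mul_comm, mul_left_comm]
  calc
    ‖𝓕 (fun x => (∫ y, K y * g (x - y)) * h x) ξ‖ₑ
    _ ≤ ∫⁻ z, ‖𝓕 (fun x => g z • (h x * K (x - z))) ξ‖ₑ := by
      simp only [htranslate]
      exact enorm_fourier_integral_le (integrable_translates_mul hg hh hK hM hbound) ξ
    _ = ∫⁻ z, ‖g z‖ₑ * ‖𝓕 (fun x => h x * K (x - z)) ξ‖ₑ :=
      lintegral_congr fun z => enorm_fourier_const_smul _ _ _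
    _ ≤ ∫⁻ z, ‖g z‖ₑ * B := lintegral_mono_ae <| hB.mono fun z hz => by gcongr
    _ = (∫⁻ z, ‖g z‖ₑ) * B := lintegral_mul_const'' _ hg.1.enorm

end Superposition

section YukawaKernel

variable {V : Type*} [NormedAddCommGroup V] {γ a s : ℝ}

/-- The radial potential `e ^ (-a |x|) |x| ^ (-γ)`, i.e. the screened power potential of order `γ`
with screening parameter `a`, which convolves the density in `hartreeOp`. -/
noncomputable def yukawaKernel (γ a : ℝ) (x : V) : ℝ :=
  exp (-(a * ‖x‖)) * ‖x‖ ^ (-γ)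

/-- The Gaussian `e ^ (-|x|² s)`, complex-valued so that its Fourier transform can be taken. -/
noncomputable def gaussian (s : ℝ) (x : V) : ℂ :=
  (exp (-(‖x‖ ^ 2 * s)) : ℝ)

lemma enorm_ofReal_yukawaKernel (x : V) :
    ‖(yukawaKernel γ a x : ℂ)‖ₑ = ENNReal.ofReal (yukawaKernel γ a x) := by
  rw [← ofReal_norm, Complex.norm_of_nonneg (by unfold yukawaKernel; positivity)]

lemma enorm_gaussian (x : V) : ‖gaussian s x‖ₑ = ENNReal.ofReal (exp (-(‖x‖ ^ 2 * s))) := by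
  rw [gaussian, ← ofReal_norm, Complex.norm_of_nonneg (exp_pos _).le]

lemma lintegral_enorm_gaussian_yukawaMixingMeasure (hγ : 0 < γ) (ha : 0 ≤ a) {x : V}
    (hx : x ≠ 0) :
    ∫⁻ s, ‖gaussian s x‖ₑ ∂yukawaMixingMeasure γ a = ENNReal.ofReal (yukawaKernel γ a x) := by
  simp only [enorm_gaussian]
  exact lintegral_exp_neg_mul_yukawaMixingMeasure hγ ha (norm_pos_iff.2 hx)

lemma integral_gaussian_yukawaMixingMeasure (hγ : 0 < γ) (ha : 0 ≤ a) {x : V} (hx : x ≠ 0) :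
    ∫ s, gaussian s x ∂yukawaMixingMeasure γ a = yukawaKernel γ a x := by
  simp only [gaussian]
  rw [integral_complex_ofReal, integral_eq_lintegral_of_nonneg_ae
    (.of_forall fun s => (exp_pos _).le) (by fun_prop),
    lintegral_exp_neg_mul_yukawaMixingMeasure hγ ha (norm_pos_iff.2 hx),
    ENNReal.toReal_ofReal (by positivity), yukawaKernel]

lemma gaussian_eq_cexp (x : V) : gaussian s x = Complex.exp (-(s : ℂ) * ‖x‖ ^ 2) := by
  simp only [gaussian, Complex.ofReal_exp]
  congr 1
  push_cast
  ring

lemma ofReal_yukawaKernel_le_rieszKernel [NormedSpace ℝ V] (ha : 0 ≤ a) (x : V) :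
    ENNReal.ofReal (yukawaKernel γ a x) ≤ rieszKernel (Module.finrank ℝ V - γ) x := by
  refine ENNReal.ofReal_le_ofReal ?_
  rw [sub_sub_cancel_left]
  exact mul_le_of_le_one_left (by positivity) (exp_le_one_iff.2 (neg_nonpos.2 (by positivity)))

lemma continuous_gaussian_comp {X : Type*} [TopologicalSpace X] {f : X → ℝ} {g : X → V}
    (hf : Continuous f) (hg : Continuous g) : Continuous fun x => gaussian (f x) (g x) := by
  unfold gaussian
  fun_prop

lemma measurable_yukawaKernel [MeasurableSpace V] [BorelSpace V] :
    Measurable (yukawaKernel γ a : V → ℝ) := by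
  unfold yukawaKernel
  fun_prop

variable [InnerProductSpace ℝ V] [FiniteDimensional ℝ V] [MeasurableSpace V] [BorelSpace V]

lemma integrable_gaussian (hs : 0 < s) : Integrable (gaussian s : V → ℂ) := by
  have := GaussianFourier.integrable_cexp_neg_mul_sq_norm_add (V := V) (b := s) (by simpa) 0 0
  simpa [funext gaussian_eq_cexp] using this

lemma enorm_fourier_gaussian (hs : 0 < s) (ξ : V) :
    ‖𝓕 (gaussian s : V → ℂ) ξ‖ₑ = ENNReal.ofReal
      ((π / s) ^ ((Module.finrank ℝ V : ℝ) / 2) * exp (-(π ^ 2 * ‖ξ‖ ^ 2 / s))) := by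
  have hexp : (-(π : ℂ) ^ 2 * (‖ξ‖ : ℂ) ^ 2 / s) = ((-(π ^ 2 * ‖ξ‖ ^ 2 / s) : ℝ) : ℂ) := by
    push_cast
    ring
  rw [show gaussian s = fun x : V => Complex.exp (-(s : ℂ) * ‖x‖ ^ 2) from funext gaussian_eq_cexp,
    fourier_gaussian_innerProductSpace (by simpa) ξ, ← ofReal_norm, norm_mul, hexp,
    Complex.norm_exp_ofReal, ← Complex.ofReal_div,
    Complex.norm_cpow_eq_rpow_re_of_pos (by positivity)]
  simp

lemma exists_lintegral_enorm_fourier_gaussian_le (hγ : 0 < γ) (hγd : γ < Module.finrank ℝ V) :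
    ∃ C : ℝ, 0 < C ∧ ∀ a : ℝ, ∀ ξ : V, ξ ≠ 0 →
      ∫⁻ s, ‖𝓕 (gaussian s : V → ℂ) ξ‖ₑ ∂yukawaMixingMeasure γ a ≤
        ENNReal.ofReal C * rieszKernel γ ξ := by
  set k : ℝ := (Module.finrank ℝ V : ℝ) / 2 with hk
  obtain ⟨C, hC, hbound⟩ := exists_lintegral_yukawaMixingMeasure_le hγ (k := k) (by linarith)
  refine ⟨π ^ k * (C * (π ^ 2) ^ (γ / 2 - k)), by positivity, fun a ξ hξ => ?_⟩
  have hξ0 : 0 < ‖ξ‖ := norm_pos_iff.2 hξ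
  calc
    ∫⁻ s, ‖𝓕 (gaussian s : V → ℂ) ξ‖ₑ ∂yukawaMixingMeasure γ a
    _ = ∫⁻ s, ENNReal.ofReal (π ^ k) *
          ENNReal.ofReal (s ^ (-k) * exp (-(π ^ 2 * ‖ξ‖ ^ 2 / s))) ∂yukawaMixingMeasure γ a := by
      refine lintegral_congr_ae <| ae_pos_yukawaMixingMeasure.mono fun s hs => ?_
      dsimp only
      rw [enorm_fourier_gaussian hs, ← hk, ← ENNReal.ofReal_mul (by positivity),
        div_rpow pi_pos.le hs.le, rpow_neg hs.le]
      ring_nf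
    _ ≤ ENNReal.ofReal (π ^ k) *
          (ENNReal.ofReal C * ENNReal.ofReal ((π ^ 2 * ‖ξ‖ ^ 2) ^ (γ / 2 - k))) := by
      rw [lintegral_const_mul' _ _ ENNReal.ofReal_ne_top]
      gcongr
      exact hbound a _ (by positivity)
    _ = ENNReal.ofReal (π ^ k * (C * (π ^ 2) ^ (γ / 2 - k))) * rieszKernel γ ξ := by
      rw [rieszKernel, ← ENNReal.ofReal_mul (by positivity), ← ENNReal.ofReal_mul (by positivity),
        ← ENNReal.ofReal_mul (by positivity), mul_rpow (by positivity) (by positivity),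
        ← rpow_natCast ‖ξ‖, ← rpow_mul hξ0.le,
        show (2 : ℕ) * (γ / 2 - k) = γ - Module.finrank ℝ V by rw [hk]; push_cast; ring]
      ring_nf

lemma stronglyMeasurable_fourier_gaussian :
    StronglyMeasurable fun v : ℝ × V => 𝓕 (gaussian v.1 : V → ℂ) v.2 := by
  have hphase : Continuous fun v : (ℝ × V) × V => 𝐞 (-inner ℝ v.2 v.1.2) :=
    continuous_fourierChar.comp (by fun_prop)
  have hint : Continuous fun v : (ℝ × V) × V => 𝐞 (-inner ℝ v.2 v.1.2) • gaussian v.1.1 v.2 :=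
    hphase.smul (continuous_gaussian_comp (by fun_prop) (by fun_prop))
  exact hint.stronglyMeasurable.integral_prod_right'

lemma integrable_mul_gaussian_sub [Nontrivial V] (hγ : 0 < γ) (ha : 0 ≤ a) {h : V → ℂ} {z : V}
    (hh : AEStronglyMeasurable h)
    (hfin : ∫⁻ x, ‖h x‖ₑ * ‖(yukawaKernel γ a (x - z) : ℂ)‖ₑ ≠ ∞) :
    Integrable (Function.uncurry fun x s => h x * gaussian s (x - z))
      (volume.prod (yukawaMixingMeasure γ a)) := by
  have hcont : Continuous fun v : V × ℝ => gaussian v.2 (v.1 - z) :=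
    continuous_gaussian_comp (by fun_prop) (by fun_prop)
  have hmeas : AEStronglyMeasurable (Function.uncurry fun x s => h x * gaussian s (x - z))
      (volume.prod (yukawaMixingMeasure γ a)) :=
    hh.comp_fst.mul hcont.aestronglyMeasurable
  refine ⟨hmeas, lt_of_eq_of_lt ?_ hfin.lt_top⟩
  rw [lintegral_prod _ hmeas.enorm]
  refine lintegral_congr_ae <| (Measure.ae_ne volume z).mono fun x hx => ?_
  simp only [Function.uncurry, enorm_mul]
  rw [lintegral_const_mul' _ _ enorm_ne_top, enorm_ofReal_yukawaKernel,
    lintegral_enorm_gaussian_yukawaMixingMeasure hγ ha (sub_ne_zero.2 hx)]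

lemma enorm_fourier_mul_yukawaKernel_sub_le_lconvolution [Nontrivial V] (hγ : 0 < γ) (ha : 0 ≤ a)
    {h : V → ℂ} (hc : Continuous h) (hi : Integrable h) (hF : Integrable (𝓕 h)) {z : V}
    (hfin : ∫⁻ x, ‖h x‖ₑ * ‖(yukawaKernel γ a (x - z) : ℂ)‖ₑ ≠ ∞) (ξ : V) :
    ‖𝓕 (fun x => h x * yukawaKernel γ a (x - z)) ξ‖ₑ ≤
      ((‖𝓕 h ·‖ₑ) ⋆ₗ
        fun η => ∫⁻ s, ‖𝓕 (gaussian s : V → ℂ) η‖ₑ ∂yukawaMixingMeasure γ a) ξ := by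
  have hmix : (fun x => h x * (yukawaKernel γ a (x - z) : ℂ)) =ᵐ[volume]
      fun x => ∫ s, h x * gaussian s (x - z) ∂yukawaMixingMeasure γ a :=
    (Measure.ae_ne volume z).mono fun x hx => by
      dsimp only
      rw [integral_const_mul, integral_gaussian_yukawaMixingMeasure hγ ha (sub_ne_zero.2 hx)]
  calc
    ‖𝓕 (fun x => h x * yukawaKernel γ a (x - z)) ξ‖ₑ
    _ ≤ ∫⁻ s, ‖𝓕 (fun x => h x * gaussian s (x - z)) ξ‖ₑ ∂yukawaMixingMeasure γ a := by
      rw [Real.fourier_congr_ae hmix]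
      exact enorm_fourier_integral_le (integrable_mul_gaussian_sub hγ ha hi.1 hfin) ξ
    _ ≤ ∫⁻ s, (∫⁻ η, ‖𝓕 h η‖ₑ * ‖𝓕 (gaussian s : V → ℂ) (-η + ξ)‖ₑ) ∂yukawaMixingMeasure γ a := by
      refine lintegral_mono_ae <| ae_pos_yukawaMixingMeasure.mono fun s hs => ?_
      refine (enorm_fourier_mul_le_lconvolution hc hi hF
        ((integrable_gaussian hs).comp_sub_right z) ξ).trans_eq ?_
      simp only [enorm_fourier_comp_sub_right]
      rfl
    _ = ∫⁻ η, ∫⁻ s, ‖𝓕 h η‖ₑ * ‖𝓕 (gaussian s : V → ℂ) (-η + ξ)‖ₑ ∂yukawaMixingMeasure γ a := by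
      have hshift : Measurable fun v : ℝ × V => (v.1, -v.2 + ξ) := by fun_prop
      have hgauss := stronglyMeasurable_fourier_gaussian.measurable.comp hshift
      have hmeas : AEMeasurable
          (fun v : ℝ × V => ‖𝓕 h v.2‖ₑ * ‖𝓕 (gaussian v.1 : V → ℂ) (-v.2 + ξ)‖ₑ)
          ((yukawaMixingMeasure γ a).prod volume) :=
        hF.1.comp_snd.enorm.mul hgauss.enorm.aemeasurable
      exact lintegral_lintegral_swap hmeas
    _ = _ := lintegral_congr fun η => lintegral_const_mul' _ _ enorm_ne_top

lemma exists_lintegral_mul_yukawaKernel_sub_le (hγ : 0 < γ) (hγd : γ < Module.finrank ℝ V)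
    {h : V → ℂ} (hc : Continuous h) (hi : Integrable h) (hF : Integrable (𝓕 h)) :
    ∃ M : ℝ≥0∞, M ≠ ∞ ∧ ∀ a : ℝ, 0 ≤ a → ∀ᵐ z,
      ∫⁻ x, ‖h x‖ₑ * ‖(yukawaKernel γ a (x - z) : ℂ)‖ₑ ≤ M := by
  obtain ⟨C, hC, hriesz⟩ := exists_eLpNorm_lconvolution_rieszKernel_le (V := V) (μ := volume)
    (q := ∞) (r := 1) (α := Module.finrank ℝ V - γ) le_top le_rfl (by linarith) (by simpa)
  have htop : eLpNorm (‖h ·‖ₑ) ∞ volume ≠ ∞ := by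
    refine ne_top_of_le_ne_top hF.2.ne (eLpNormEssSup_le_of_ae_enorm_bound (.of_forall fun x => ?_))
    simpa using enorm_le_lintegral_enorm_fourier hc hi hF x
  have hone : eLpNorm (‖h ·‖ₑ) 1 volume ≠ ∞ := by
    simpa [eLpNorm_one_eq_lintegral_enorm] using hi.2.ne
  refine ⟨_, ENNReal.mul_ne_top hC (max_lt htop.lt_top hone.lt_top).ne, fun a ha => ?_⟩
  filter_upwards [enorm_ae_le_eLpNormEssSup ((‖h ·‖ₑ) ⋆ₗ rieszKernel (Module.finrank ℝ V - γ))
    volume] with z hz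
  calc
    ∫⁻ x, ‖h x‖ₑ * ‖(yukawaKernel γ a (x - z) : ℂ)‖ₑ
    _ ≤ ((‖h ·‖ₑ) ⋆ₗ rieszKernel (Module.finrank ℝ V - γ)) z := by
      refine lintegral_mono fun x => ?_
      rw [enorm_ofReal_yukawaKernel]
      gcongr
      refine (ofReal_yukawaKernel_le_rieszKernel ha _).trans_eq ?_
      rw [rieszKernel, rieszKernel, norm_sub_rev, sub_eq_neg_add]
    _ ≤ eLpNorm ((‖h ·‖ₑ) ⋆ₗ rieszKernel (Module.finrank ℝ V - γ)) ∞ volume := by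
      simpa using hz
    _ ≤ _ := hriesz _ hc.measurable.enorm

theorem exists_enorm_fourier_yukawaKernel_convolution_mul_le (hγ : 0 < γ)
    (hγd : γ < Module.finrank ℝ V) :
    ∃ C : ℝ, 0 < C ∧ ∀ a : ℝ, 0 ≤ a → ∀ {g h : V → ℂ}, Integrable g → Continuous h →
      Integrable h → Integrable (𝓕 h) → ∀ ξ : V,
        ‖𝓕 (fun x => (∫ y, (yukawaKernel γ a y : ℂ) * g (x - y)) * h x) ξ‖ₑ ≤
          (∫⁻ z, ‖g z‖ₑ) * (ENNReal.ofReal C * ((‖𝓕 h ·‖ₑ) ⋆ₗ rieszKernel γ) ξ) := by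
  have : Nontrivial V :=
    Module.nontrivial_of_finrank_pos (R := ℝ) (Nat.cast_pos.1 (hγ.trans hγd))
  obtain ⟨C, hC, hgauss⟩ := exists_lintegral_enorm_fourier_gaussian_le (V := V) hγ hγd
  refine ⟨C, hC, fun a ha g h hg hc hi hF ξ => ?_⟩
  obtain ⟨M, hM, hbound⟩ := exists_lintegral_mul_yukawaKernel_sub_le hγ hγd hc hi hF
  refine enorm_fourier_convolution_mul_le hg hi.1
    (Complex.measurable_ofReal.comp measurable_yukawaKernel) hM (hbound a ha) ?_
  filter_upwards [hbound a ha] with z hz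
  refine (enorm_fourier_mul_yukawaKernel_sub_le_lconvolution hγ ha hc hi hF
    (ne_top_of_le_ne_top hM hz) ξ).trans ?_
  rw [lconvolution_def, lconvolution_def, ← lintegral_const_mul' _ _ ENNReal.ofReal_ne_top]
  refine lintegral_mono_ae <| (Measure.ae_ne volume ξ).mono fun η hη => ?_
  rw [mul_left_comm]
  gcongr
  exact hgauss a _ (by rwa [ne_eq, neg_add_eq_zero])

end YukawaKernel

section HartreeEstimate

lemma lintegral_enorm_mul_conj_le {X : Type*} [MeasurableSpace X] {μ : Measure X} {s s' : ℝ≥0∞}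
    [ENNReal.HolderConjugate s s'] {f g : X → ℂ} (hf : AEStronglyMeasurable f μ)
    (hg : AEStronglyMeasurable g μ) :
    ∫⁻ x, ‖f x * (starRingEnd ℂ) (g x)‖ₑ ∂μ ≤ eLpNorm f s μ * eLpNorm g s' μ := by
  have hholder : eLpNorm (f • star g) 1 μ ≤ eLpNorm f s μ * eLpNorm (star g) s' μ :=
    eLpNorm_smul_le_mul_eLpNorm hg.star hf
  rwa [eLpNorm_star, eLpNorm_one_eq_lintegral_enorm] at hholder

lemma eLpNorm_fourier_two {V : Type*} [NormedAddCommGroup V] [InnerProductSpace ℝ V]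
    [FiniteDimensional ℝ V] [MeasurableSpace V] [BorelSpace V] (f : SchwartzMap V ℂ) :
    eLpNorm (𝓕 (⇑f)) 2 volume = eLpNorm (⇑f) 2 volume := by
  have h := SchwartzMap.norm_fourier_toL2_eq f
  rwa [SchwartzMap.norm_toLp, SchwartzMap.norm_toLp, ENNReal.toReal_eq_toReal_iff'
    (SchwartzMap.memLp _ _ _).2.ne (SchwartzMap.memLp _ _ _).2.ne] at h

theorem hartree_fourier_lebesgue_estimate_low_general (d : ℕ) {q r : ℝ≥0∞} (hq : 1 ≤ q)
    (hr : 1 ≤ r) {γ : ℝ} (hγ0 : 0 < γ) (hγ : γ < d * (r.toReal⁻¹ - q.toReal⁻¹)) :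
    ∃ C : ℝ, 0 < C ∧ ∀ a : ℝ, 0 ≤ a → ∀ s s' : ℝ≥0∞, ENNReal.HolderConjugate s s' →
      ∀ f₁ f₂ f₃ : EuclideanSpace ℝ (Fin d) → ℂ, MemLp f₁ s → MemLp f₂ s' →
        Continuous f₃ → Integrable f₃ → Integrable (𝓕 f₃) →
        eLpNorm (𝓕 (hartreeOp d a γ f₁ f₂ f₃)) q volume ≤
          ENNReal.ofReal C * eLpNorm f₁ s volume * eLpNorm f₂ s' volume *
            max (eLpNorm (𝓕 f₃) q volume) (eLpNorm (𝓕 f₃) r volume) := by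
  have hr_inv : r.toReal⁻¹ ≤ 1 := by
    rw [← ENNReal.toReal_inv]
    exact ENNReal.toReal_mono ENNReal.one_ne_top (ENNReal.inv_le_one.2 hr)
  have hγd : γ < d := hγ.trans_le <| mul_le_of_le_one_right d.cast_nonneg <|
    (sub_le_self _ (by positivity)).trans hr_inv
  obtain ⟨C, hC, hpointwise⟩ := exists_enorm_fourier_yukawaKernel_convolution_mul_le
    (V := EuclideanSpace ℝ (Fin d)) hγ0 (by simpa)
  obtain ⟨K, hK, hriesz⟩ := exists_eLpNorm_lconvolution_rieszKernel_le
    (V := EuclideanSpace ℝ (Fin d)) (μ := volume) hq hr hγ0 (by simpa)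
  refine ⟨C * (K.toReal + 1), by positivity, fun a ha s s' _ f₁ f₂ f₃ hf₁ hf₂ hc hi hF => ?_⟩
  have hKle : K ≤ ENNReal.ofReal (K.toReal + 1) := by
    rw [← ENNReal.ofReal_toReal hK]
    exact ENNReal.ofReal_le_ofReal (by simp)
  have hF_meas : Measurable (‖𝓕 f₃ ·‖ₑ) := (continuous_fourier_of_integrable hi).measurable.enorm
  calc
    eLpNorm (𝓕 (hartreeOp d a γ f₁ f₂ f₃)) q volume
    _ ≤ ((∫⁻ z, ‖f₁ z * (starRingEnd ℂ) (f₂ z)‖ₑ) * ENNReal.ofReal C) *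
          eLpNorm ((‖𝓕 f₃ ·‖ₑ) ⋆ₗ rieszKernel γ) q volume := by
      refine eLpNorm_le_mul_eLpNorm_of_ae_le_mul'' q (measurable_lconvolution volume hF_meas
        measurable_rieszKernel).aestronglyMeasurable (.of_forall fun ξ => ?_)
      rw [enorm_eq_self, mul_assoc]
      exact hpointwise a ha (hf₁.integrable_mul hf₂.star) hc hi hF ξ
    _ ≤ (eLpNorm f₁ s volume * eLpNorm f₂ s' volume * ENNReal.ofReal C) *
          (ENNReal.ofReal (K.toReal + 1) *
            max (eLpNorm (‖𝓕 f₃ ·‖ₑ) q volume) (eLpNorm (‖𝓕 f₃ ·‖ₑ) r volume)) := by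
      gcongr
      · exact lintegral_enorm_mul_conj_le hf₁.1 hf₂.1
      · exact (hriesz _ hF_meas).trans (by gcongr)
    _ = _ := by
      rw [eLpNorm_enorm, eLpNorm_enorm, ENNReal.ofReal_mul hC.le]
      ring

end HartreeEstimate

/-- For `1 ≤ p < 2` and `0 < γ < d(1/p - 1/2)`:
`‖H_{a,γ}(f₁,f₂,f₃)‖_{L̂^p} ≤ C ‖f₁‖_{L²} ‖f₂‖_{L²} max(‖f₃‖_{L̂^p}, ‖f₃‖_{L²})`
for Schwartz functions, with `C = C(d,γ,p)` independent of `a ≥ 0`;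
here `‖f‖_{L̂^p} = ‖𝓕 f‖_{L^{p'}}` with `1/p + 1/p' = 1`. -/
theorem hartree_fourier_lebesgue_estimate_low (d : ℕ) (hd : 1 ≤ d)
    (p p' : ℝ≥0∞) (hp1 : 1 ≤ p) (hp2 : p < 2) (hpp' : 1 / p + 1 / p' = 1)
    (γ : ℝ) (hγ0 : 0 < γ) (hγ : γ < d * (1 / p.toReal - 1 / 2)) :
    ∃ C : ℝ, 0 < C ∧ ∀ a : ℝ, 0 ≤ a →
      ∀ f₁ f₂ f₃ : SchwartzMap (EuclideanSpace ℝ (Fin d)) ℂ,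
        eLpNorm (𝓕 (hartreeOp d a γ (⇑f₁) (⇑f₂) (⇑f₃))) p' volume ≤
          ENNReal.ofReal C * eLpNorm (⇑f₁) 2 volume * eLpNorm (⇑f₂) 2 volume *
            max (eLpNorm (𝓕 (⇑f₃)) p' volume) (eLpNorm (⇑f₃) 2 volume) := by
  have hconj : ENNReal.HolderConjugate p p' := by simpa [ENNReal.holderConjugate_iff] using hpp'
  have hexp : (2 : ℝ≥0∞).toReal⁻¹ - p'.toReal⁻¹ = 1 / p.toReal - 1 / 2 := by
    have hinv := congrArg ENNReal.toReal (ENNReal.HolderConjugate.one_sub_inv p p')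
    rw [ENNReal.toReal_sub_of_le (ENNReal.inv_le_one.2 hp1) ENNReal.one_ne_top] at hinv
    simp only [ENNReal.toReal_inv, ENNReal.toReal_one, ENNReal.toReal_ofNat] at hinv ⊢
    rw [← hinv]
    ring
  obtain ⟨C, hC, hbound⟩ := hartree_fourier_lebesgue_estimate_low_general d
    (ENNReal.HolderConjugate.one_le p' p) one_le_two hγ0 (hexp ▸ hγ)
  refine ⟨C, hC, fun a ha f₁ f₂ f₃ => ?_⟩
  rw [← eLpNorm_fourier_two f₃]
  exact hbound a ha 2 2 inferInstance f₁ f₂ f₃ (f₁.memLp 2) (f₂.memLp 2) f₃.continuous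
    f₃.integrable (𝓕 f₃).integrable
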